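/- Let n ≡ h (mod k) with 0 ≤ h < k and suppose k > (q^h - 1)/(q - 1). Then the maximum cardinality of a partial k-spread of F_q^n (a set of k-dimensional subspaces pairwise intersecting trivially) is (q^n - q^{k+h})/(q^k - 1) + 1, which equals Σ_{i=1}^{s-1} q^{ik+h} + 1 when n = sk + h. -/

import Mathlib

/-!
The extremal spread is built one block of dimension `k` at a time: if `V = A × B` with
`dim A = k ≤ dim B`, then multiplication in the field extension of degree `dim B` yields
`q ^ dim B` linear maps `A → B` with injective pairwise differences; their graphs are disjoint from
each other and from `B`, so they can be added to any partial `k`-spread of `B`.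

For the upper bound, consider pairwise disjoint subspaces of dimension at least `c` whose number is
`x + 1` modulo `q ^ c`, with `x > 0`, and let `N` be the number of nonzero vectors they miss.
Counting vectors shows that `(q - 1) * q ^ c` divides `N + x * (q ^ c - 1)`. Some hyperplane
contains at most a `1 / q` fraction of these `N` vectors, and it meets the subspaces in dimension at
least `c - 1`. By induction on `c` the quotient is at least `c`: each return from a hyperplane to
the whole space gives a strict inequality, which divisibility improves to the next integer. For a
partial `k`-spread with `x` members too many, the quotient equals `(q ^ h - 1) / (q - 1)`.
-/

open Module Function

section Arithmetic

theorem pow_modEq_pow_mul_sub_one (a : ℤ) {c d : ℕ} (hcd : c ≤ d) :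
    a ^ d ≡ a ^ c [ZMOD (a - 1) * a ^ c] := by
  obtain ⟨e, rfl⟩ := Nat.exists_eq_add_of_le hcd
  have hpow : a ^ e ≡ 1 [ZMOD a - 1] := by simpa using (Int.modEq_sub a 1).pow e
  simpa [pow_add, mul_comm] using hpow.mul_right' (c := a ^ c)

theorem pow_mul_sum_Icc_pow_add {R : Type*} [CommSemiring R] (a : R) (k h t : ℕ) :
    a ^ k * ∑ i ∈ Finset.Icc 1 t, a ^ (i * k + h) + a ^ (k + h) =
      ∑ i ∈ Finset.Icc 1 t, a ^ (i * k + h) + a ^ ((t + 1) * k + h) := by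
  induction t with
  | zero => simp
  | succ t ih =>
    rw [Finset.sum_Icc_succ_top (by omega), mul_add, add_right_comm, ih]
    ring

theorem pow_sub_pow_div_pow_sub_one {a k : ℕ} (hak : 1 < a ^ k) (h t : ℕ) :
    (a ^ ((t + 1) * k + h) - a ^ (k + h)) / (a ^ k - 1) =
      ∑ i ∈ Finset.Icc 1 t, a ^ (i * k + h) := by
  have hsum := pow_mul_sum_Icc_pow_add a k h t
  refine Nat.div_eq_of_eq_mul_right (Nat.sub_pos_of_lt hak) ?_
  rw [Nat.sub_one_mul]
  omega

end Arithmetic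

section Holes

variable {F V ι : Type*} [Field F] [AddCommGroup V] [Module F V]

local notation "q" => Nat.card F

/-- The holes of a family of subspaces: the nonzero vectors lying in no member of the family.
The literature counts holes as points of projective space; counting vectors instead multiplies
their number by `q - 1`. -/
def holes (W : ι → Submodule F V) : Set V := {v | v ≠ 0 ∧ ∀ i, v ∉ W i}

theorem zero_notMem_holes (W : ι → Submodule F V) : 0 ∉ holes W := fun h ↦ h.1 rfl

theorem ncard_holes_submoduleOf (W : ι → Submodule F V) (H : Submodule F V) :
    (holes fun i ↦ (W i).submoduleOf H).ncard = (holes W ∩ H).ncard := by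
  have hpre : (holes fun i ↦ (W i).submoduleOf H) = ((↑) : H → V) ⁻¹' holes W := by
    ext v
    simp [holes, Submodule.submoduleOf]
  rw [hpre, ← Set.ncard_image_of_injective _ Subtype.val_injective, Set.inter_comm]
  exact congrArg Set.ncard (Subtype.image_preimage_coe _ _)

theorem pairwise_disjoint_submoduleOf {W : ι → Submodule F V} (hW : Pairwise (Disjoint on W))
    (H : Submodule F V) : Pairwise (Disjoint on fun i ↦ (W i).submoduleOf H) := by
  intro i j hij
  rw [onFun, disjoint_iff, Submodule.submoduleOf, Submodule.submoduleOf, ← Submodule.comap_inf,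
    (hW hij).eq_bot, Submodule.comap_bot, Submodule.ker_subtype]

variable [Module.Finite F V]

theorem finrank_le_finrank_submoduleOf_add_one {H : Submodule F V}
    (hH : finrank F H + 1 = finrank F V) (U : Submodule F V) :
    finrank F U ≤ finrank F (U.submoduleOf H) + 1 := by
  have hinf : finrank F (U.submoduleOf H) = finrank F ↥(H ⊓ U) := by
    rw [← Submodule.map_comap_subtype, Submodule.finrank_map_subtype_eq, Submodule.submoduleOf]
  have hsup := Submodule.finrank_sup_add_finrank_inf_eq H U
  have hle := Submodule.finrank_le (H ⊔ U)
  omega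

theorem natCard_mul_ncard_dual_apply_eq_zero {v : V} (hv : v ≠ 0) :
    q * {f : Dual F V | f v = 0}.ncard = q ^ finrank F V := by
  have heval : Dual.eval F V v ≠ 0 := by rwa [Ne, eval_apply_eq_zero_iff]
  have hker : {f : Dual F V | f v = 0} = LinearMap.ker (Dual.eval F V v) := rfl
  rw [hker, ← Nat.card_coe_set_eq, SetLike.coe_sort_coe,
    Module.natCard_eq_pow_finrank (K := F) (V := LinearMap.ker (Dual.eval F V v)), ← pow_succ',
    Dual.finrank_ker_add_one_of_ne_zero heval, Subspace.dual_finrank_eq]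

variable [Finite F]

theorem natCard_mul_sum_ncard_inter_ker [Fintype (Dual F V)] {A : Set V} (hA : 0 ∉ A) :
    q * ∑ f : Dual F V, (A ∩ LinearMap.ker f).ncard = A.ncard * q ^ finrank F V := by
  classical
  have : Finite V := Module.finite_of_finite F
  lift A to Finset V using A.toFinite
  have hrow (f : Dual F V) :
      ((A : Set V) ∩ LinearMap.ker f).ncard = (A.bipartiteAbove (fun f v ↦ f v = 0) f).card := by
    rw [← Set.ncard_coe_finset, Finset.bipartiteAbove, Finset.coe_filter]
    rfl
  have hcol (v : V) (hv : v ∈ A) :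
      q * (Finset.univ.bipartiteBelow (fun (f : Dual F V) v ↦ f v = 0) v).card =
        q ^ finrank F V := by
    rw [← natCard_mul_ncard_dual_apply_eq_zero (F := F) (ne_of_mem_of_not_mem hv hA),
      ← Set.ncard_coe_finset, Finset.bipartiteBelow, Finset.coe_filter_univ]
  simp only [hrow]
  rw [Finset.sum_card_bipartiteAbove_eq_sum_card_bipartiteBelow, Finset.mul_sum,
    Finset.sum_congr rfl hcol, Finset.sum_const, smul_eq_mul, Set.ncard_coe_finset]

theorem exists_hyperplane_natCard_mul_ncard_inter_le [Nontrivial V] {A : Set V} (hA : 0 ∉ A) :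
    ∃ H : Submodule F V, finrank F H + 1 = finrank F V ∧ q * (A ∩ H).ncard ≤ A.ncard := by
  classical
  have : Finite (Dual F V) := Module.finite_of_finite F
  have := Fintype.ofFinite (Dual F V)
  have hdual : (Finset.univ.erase (0 : Dual F V)).card = q ^ finrank F V - 1 := by
    rw [Finset.card_erase_of_mem (Finset.mem_univ _), Finset.card_univ, ← Nat.card_eq_fintype_card,
      Module.natCard_eq_pow_finrank (K := F), Subspace.dual_finrank_eq]
  have hsum : ∑ f ∈ Finset.univ.erase (0 : Dual F V), q * (A ∩ LinearMap.ker f).ncard ≤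
      ∑ _f ∈ Finset.univ.erase (0 : Dual F V), A.ncard := by
    have htotal := natCard_mul_sum_ncard_inter_ker (F := F) hA
    have hzero : A.ncard ≤ q * (A ∩ LinearMap.ker (0 : Dual F V)).ncard := by
      simpa using Nat.le_mul_of_pos_left A.ncard Nat.card_pos
    rw [Finset.mul_sum, ← Finset.add_sum_erase _ _ (Finset.mem_univ 0)] at htotal
    rw [Finset.sum_const, hdual, smul_eq_mul, mul_comm, Nat.mul_sub_one]
    omega
  have hne : (Finset.univ.erase (0 : Dual F V)).Nonempty := by
    obtain ⟨f, hf⟩ := exists_ne (0 : Dual F V)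
    exact ⟨f, Finset.mem_erase.2 ⟨hf, Finset.mem_univ f⟩⟩
  obtain ⟨f, hf, hle⟩ := Finset.exists_le_of_sum_le hne hsum
  exact ⟨LinearMap.ker f, Dual.finrank_ker_add_one_of_ne_zero (Finset.ne_of_mem_erase hf), hle⟩

variable [Fintype ι] {W : ι → Submodule F V}

theorem ncard_holes (hW : Pairwise (Disjoint on W)) :
    ((holes W).ncard : ℤ) =
      (q : ℤ) ^ finrank F V - 1 - ∑ i, ((q : ℤ) ^ finrank F (W i) - 1) := by
  have : Finite V := Module.finite_of_finite F
  have hcompl : (holes W)ᶜ = insert 0 (⋃ i, (W i : Set V) \ {0}) := by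
    ext v
    simp only [holes, Set.mem_compl_iff, Set.mem_ofPred_eq, Set.mem_insert_iff, Set.mem_iUnion,
      Set.mem_sdiff, Set.mem_singleton_iff, SetLike.mem_coe]
    grind
  have hdisj : Pairwise (Disjoint on fun i ↦ (W i : Set V) \ {0}) := by
    intro i j hij
    rw [onFun, Set.disjoint_left]
    rintro v ⟨hvi, hv⟩ ⟨hvj, -⟩
    exact hv (Submodule.disjoint_def.1 (hW hij) v hvi hvj)
  have hcard (i : ι) : (((W i : Set V) \ {0}).ncard : ℤ) = (q : ℤ) ^ finrank F (W i) - 1 := by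
    rw [eq_sub_iff_add_eq]
    norm_cast
    rw [Set.ncard_sdiff_singleton_add_one (W i).zero_mem, ← Module.natCard_eq_pow_finrank]
    rfl
  have htotal := Set.ncard_add_ncard_compl (holes W)
  rw [hcompl, Set.ncard_insert_of_notMem (by simp),
    Set.ncard_iUnion_of_finite (fun _ ↦ Set.toFinite _) hdisj, finsum_eq_sum_of_fintype,
    Module.natCard_eq_pow_finrank (K := F)] at htotal
  simp only [← hcard]
  rw [← Nat.cast_pow, ← htotal]
  push_cast
  ring

variable [Nonempty ι] {c x : ℕ}

theorem ncard_holes_modEq (hW : Pairwise (Disjoint on W)) (hc : ∀ i, c ≤ finrank F (W i)) :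
    ((holes W).ncard : ℤ) ≡ (1 - Fintype.card ι) * ((q : ℤ) ^ c - 1)
      [ZMOD ((q : ℤ) - 1) * (q : ℤ) ^ c] := by
  have hV : c ≤ finrank F V := (hc (Classical.arbitrary ι)).trans (Submodule.finrank_le _)
  have hpow {d : ℕ} (hd : c ≤ d) := (pow_modEq_pow_mul_sub_one q hd).sub_right 1
  have hsum := Int.ModEq.sum fun i (_ : i ∈ Finset.univ) ↦ hpow (hc i)
  rw [ncard_holes hW]
  convert! (hpow hV).sub hsum using 1
  simp only [Finset.sum_const, Finset.card_univ, nsmul_eq_mul]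
  ring

theorem dvd_ncard_holes_add (hW : Pairwise (Disjoint on W)) (hc : ∀ i, c ≤ finrank F (W i))
    (hι : Fintype.card ι ≡ x + 1 [MOD q ^ c]) :
    ((q : ℤ) - 1) * (q : ℤ) ^ c ∣ (holes W).ncard + x * ((q : ℤ) ^ c - 1) := by
  have hdvd : (q : ℤ) ^ c ∣ x + 1 - Fintype.card ι := by exact_mod_cast Nat.modEq_iff_dvd.1 hι
  convert! (mul_dvd_mul (sub_one_dvd_pow_sub_one (q : ℤ) c) hdvd).add
    (ncard_holes_modEq hW hc).symm.dvd using 1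
  ring

theorem mul_le_ncard_holes_add (hW : Pairwise (Disjoint on W)) (hc : ∀ i, c ≤ finrank F (W i))
    (hx : 0 < x) (hι : Fintype.card ι ≡ x + 1 [MOD q ^ c]) :
    (c : ℤ) * (((q : ℤ) - 1) * (q : ℤ) ^ c) ≤ (holes W).ncard + x * ((q : ℤ) ^ c - 1) := by
  induction c generalizing V with
  | zero => simp
  | succ c ih =>
    have hq : (1 : ℤ) < q := by exact_mod_cast Finite.one_lt_card
    have : Nontrivial V := finrank_pos_iff (R := F).1 <|
      c.succ_pos.trans_le ((hc (Classical.arbitrary ι)).trans (Submodule.finrank_le _))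
    obtain ⟨H, hH, hle⟩ :=
      exists_hyperplane_natCard_mul_ncard_inter_le (F := F) (zero_notMem_holes W)
    have hbound := ih (pairwise_disjoint_submoduleOf hW H)
      (fun i ↦ Nat.succ_le_succ_iff.1 ((hc i).trans (finrank_le_finrank_submoduleOf_add_one hH _)))
      (hι.of_dvd (pow_dvd_pow _ c.le_succ))
    rw [ncard_holes_submoduleOf] at hbound
    have hlt : (c : ℤ) * (((q : ℤ) - 1) * (q : ℤ) ^ (c + 1)) <
        (holes W).ncard + x * ((q : ℤ) ^ (c + 1) - 1) :=
      calc (c : ℤ) * (((q : ℤ) - 1) * (q : ℤ) ^ (c + 1))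
        _ = q * (c * (((q : ℤ) - 1) * (q : ℤ) ^ c)) := by ring
        _ ≤ q * ((holes W ∩ H).ncard + x * ((q : ℤ) ^ c - 1)) := by gcongr
        _ = (q * (holes W ∩ H).ncard : ℕ) + x * ((q : ℤ) ^ (c + 1) - q) := by
          push_cast
          ring
        _ < (holes W).ncard + x * ((q : ℤ) ^ (c + 1) - 1) :=
          add_lt_add_of_le_of_lt (by exact_mod_cast hle) (by gcongr)
    have hdvd := (dvd_ncard_holes_add hW hc hι).sub (dvd_mul_left _ (c : ℤ))
    have hgap := Int.le_of_dvd (sub_pos.2 hlt) hdvd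
    push_cast
    linarith

end Holes

section PartialSpread

variable {F V V' : Type*} [Field F] [AddCommGroup V] [Module F V] [AddCommGroup V'] [Module F V']
  {k h t x : ℕ} {S T : Set (Submodule F V)}

local notation "q" => Nat.card F

/-- A partial `k`-spread of a vector space: a set of `k`-dimensional subspaces any two of which
intersect only in zero, the latter expressed as disjointness in the lattice of subspaces. -/
structure IsPartialSpread (k : ℕ) (S : Set (Submodule F V)) : Prop where
  finrank_eq : ∀ U ∈ S, finrank F U = k
  pairwiseDisjoint : S.PairwiseDisjoint id

theorem isPartialSpread_iff :
    IsPartialSpread k S ↔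
      (∀ U ∈ S, finrank F U = k) ∧ ∀ U ∈ S, ∀ U' ∈ S, U ≠ U' → U ⊓ U' = ⊥ := by
  simp only [← disjoint_iff]
  exact ⟨fun h ↦ ⟨h.1, h.2⟩, fun h ↦ ⟨h.1, h.2⟩⟩

theorem isPartialSpread_singleton (U : Submodule F V) : IsPartialSpread (finrank F U) {U} :=
  ⟨by simp, Set.pairwiseDisjoint_singleton _ _⟩

theorem isPartialSpread_range {ι : Type*} {W : ι → Submodule F V}
    (hk : ∀ i, finrank F (W i) = k) (hW : Pairwise (Disjoint on W)) :
    IsPartialSpread k (Set.range W) :=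
  ⟨Set.forall_mem_range.2 hk, hW.range_pairwise⟩

namespace IsPartialSpread

theorem ne_bot (hS : IsPartialSpread k S) (hk : 0 < k) {U : Submodule F V} (hU : U ∈ S) :
    U ≠ ⊥ := by
  rintro rfl
  exact hk.ne (finrank_bot F V ▸ hS.finrank_eq ⊥ hU)

theorem union (hS : IsPartialSpread k S) (hT : IsPartialSpread k T)
    (hST : ∀ U ∈ S, ∀ U' ∈ T, Disjoint U U') : IsPartialSpread k (S ∪ T) where
  finrank_eq U hU := hU.elim (hS.finrank_eq U) (hT.finrank_eq U)
  pairwiseDisjoint :=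
    hS.pairwiseDisjoint.union hT.pairwiseDisjoint fun U hU U' hU' _ ↦ hST U hU U' hU'

theorem image_map (hS : IsPartialSpread k S) {f : V →ₗ[F] V'} (hf : Injective f) :
    IsPartialSpread k (Submodule.map f '' S) where
  finrank_eq := by
    rintro _ ⟨U, hU, rfl⟩
    exact (Submodule.equivMapOfInjective f hf U).finrank_eq.symm.trans (hS.finrank_eq U hU)
  pairwiseDisjoint := by
    rintro _ ⟨U, hU, rfl⟩ _ ⟨U', hU', rfl⟩ hne
    exact Submodule.disjoint_map hf (hS.pairwiseDisjoint hU hU' (ne_of_apply_ne _ hne))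

end IsPartialSpread

theorem finrank_graph (f : V →ₗ[F] V') : finrank F f.graph = finrank F V := by
  rw [LinearMap.graph_eq_range_prod]
  exact LinearMap.finrank_range_of_inj fun _ _ h ↦ congrArg Prod.fst h

theorem disjoint_graph_iff_injective_sub {f g : V →ₗ[F] V'} :
    Disjoint f.graph g.graph ↔ Injective (f - g) := by
  rw [Submodule.disjoint_def, injective_iff_map_eq_zero]
  simp only [Prod.forall, LinearMap.mem_graph_iff, forall_eq, Prod.mk_eq_zero, LinearMap.sub_apply,
    sub_eq_zero]
  exact forall_congr' fun v ↦
    ⟨fun h hv ↦ (h hv).1, fun h hv ↦ ⟨h hv, by rw [h hv, map_zero]⟩⟩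

theorem disjoint_graph_range_inr (f : V →ₗ[F] V') :
    Disjoint f.graph (LinearMap.range (LinearMap.inr F V V')) := by
  rw [Submodule.disjoint_def]
  rintro _ hf ⟨u, rfl⟩
  simpa using hf

variable [Module.Finite F V]

theorem exists_submodule_finrank_eq (hk : k ≤ finrank F V) :
    ∃ U : Submodule F V, finrank F U = k := by
  obtain ⟨f, hf⟩ := (finrank_le_iff_exists_linearMap (R := F) (M := Fin k → F) (M' := V)).1
    (by simpa using hk)
  exact ⟨LinearMap.range f, by simp [LinearMap.finrank_range_of_inj hf]⟩

variable [Finite F]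

variable (F) in
theorem exists_field_finrank_eq {m : ℕ} (hm : m ≠ 0) :
    ∃ (L : Type) (_ : Field L) (_ : Algebra F L), finrank F L = m := by
  have : NeZero m := ⟨hm⟩
  obtain ⟨p, _⟩ := CharP.exists F
  have : Fact p.Prime := ⟨CharP.char_is_prime F p⟩
  exact ⟨FiniteField.Extension F p m, inferInstance, inferInstance,
    FiniteField.finrank_extension F p m⟩

variable [Module.Finite F V']

theorem exists_linearMap_forall_ne_zero_injective (hle : finrank F V ≤ finrank F V') :
    ∃ B : V' →ₗ[F] V →ₗ[F] V', ∀ b, b ≠ 0 → Injective (B b) := by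
  rcases subsingleton_or_nontrivial V' with _ | _
  · exact ⟨0, fun b hb ↦ (hb (Subsingleton.elim b 0)).elim⟩
  obtain ⟨L, _, _, hL⟩ := exists_field_finrank_eq F (finrank_pos (R := F) (M := V')).ne'
  have : Module.Finite F L := finite_of_finrank_pos (hL ▸ finrank_pos)
  obtain ⟨g, hg⟩ := finrank_le_iff_exists_linearMap.1 (hle.trans_eq hL.symm)
  let e : V' ≃ₗ[F] L := LinearEquiv.ofFinrankEq V' L hL.symm
  refine ⟨((LinearMap.mul F L).compl₁₂ e g).compr₂ e.symm, fun b hb ↦ ?_⟩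
  exact e.symm.injective.comp ((mul_right_injective₀ (e.map_ne_zero_iff.2 hb)).comp hg)

theorem exists_isPartialSpread_prod_disjoint_range_inr (hV : 0 < finrank F V)
    (hle : finrank F V ≤ finrank F V') :
    ∃ S : Set (Submodule F (V × V')), IsPartialSpread (finrank F V) S ∧
      S.ncard = q ^ finrank F V' ∧
      ∀ U ∈ S, Disjoint U (LinearMap.range (LinearMap.inr F V V')) := by
  obtain ⟨B, hB⟩ := exists_linearMap_forall_ne_zero_injective hle
  have hdisj : Pairwise (Disjoint on fun b ↦ (B b).graph) := fun b b' hne ↦ by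
    rw [onFun, disjoint_graph_iff_injective_sub, ← map_sub]
    exact hB _ (sub_ne_zero.2 hne)
  have hS := isPartialSpread_range (fun b ↦ finrank_graph (B b)) hdisj
  have hinj : Injective fun b ↦ (B b).graph := pairwise_ne_iff_injective.1 <|
    hdisj.mono fun b _ h ↦ h.ne (hS.ne_bot hV ⟨b, rfl⟩)
  refine ⟨_, hS, ?_, Set.forall_mem_range.2 fun b ↦ disjoint_graph_range_inr (B b)⟩
  rw [Set.ncard_range_of_injective hinj, Module.natCard_eq_pow_finrank (K := F)]

theorem IsPartialSpread.exists_prod {S : Set (Submodule F V')}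
    (hS : IsPartialSpread (finrank F V) S) (hV : 0 < finrank F V)
    (hle : finrank F V ≤ finrank F V') :
    ∃ T : Set (Submodule F (V × V')), IsPartialSpread (finrank F V) T ∧
      T.ncard = q ^ finrank F V' + S.ncard := by
  have : Finite (V × V') := Module.finite_of_finite F
  obtain ⟨R, hR, hRcard, hRdisj⟩ := exists_isPartialSpread_prod_disjoint_range_inr hV hle
  have hinr : Injective (LinearMap.inr F V V') := LinearMap.inr_injective
  have hsep : ∀ U ∈ R, ∀ U' ∈ Submodule.map (LinearMap.inr F V V') '' S, Disjoint U U' := by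
    rintro U hU _ ⟨U', -, rfl⟩
    exact (hRdisj U hU).mono_right LinearMap.map_le_range
  have hdisj : Disjoint R (Submodule.map (LinearMap.inr F V V') '' S) :=
    Set.disjoint_left.2 fun U hU hU' ↦ hR.ne_bot hV hU (disjoint_self.1 (hsep U hU U hU'))
  refine ⟨_, hR.union (hS.image_map hinr) hsep, ?_⟩
  rw [Set.ncard_union_eq hdisj, hRcard,
    Set.ncard_image_of_injective _ (Submodule.map_injective_of_injective hinr)]

theorem exists_isPartialSpread_ncard_eq (hk : 0 < k) (hV : finrank F V = (t + 1) * k + h) :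
    ∃ S : Set (Submodule F V), IsPartialSpread k S ∧
      S.ncard = ∑ i ∈ Finset.Icc 1 t, q ^ (i * k + h) + 1 := by
  induction t generalizing V with
  | zero =>
    obtain ⟨U, rfl⟩ := exists_submodule_finrank_eq (F := F) (V := V) (k := k) (by omega)
    exact ⟨{U}, isPartialSpread_singleton U, by simp⟩
  | succ t ih =>
    obtain ⟨A, rfl⟩ := exists_submodule_finrank_eq (F := F) (V := V) (k := k)
      (by rw [hV]; nlinarith)
    obtain ⟨B, hAB⟩ := A.exists_isCompl
    have hB : finrank F B = (t + 1) * finrank F A + h := by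
      have hadd := Submodule.finrank_add_eq_of_isCompl hAB
      linarith
    obtain ⟨S, hS, hScard⟩ := ih hB
    obtain ⟨T, hT, hTcard⟩ := hS.exists_prod hk (by rw [hB]; nlinarith)
    have hinj : Injective (A.prodEquivOfIsCompl B hAB).toLinearMap := LinearEquiv.injective _
    refine ⟨_, hT.image_map hinj, ?_⟩
    rw [Set.ncard_image_of_injective _ (Submodule.map_injective_of_injective hinj), hTcard, hScard,
      hB, Finset.sum_Icc_succ_top (by omega)]
    ring

namespace IsPartialSpread

theorem mul_le_of_ncard_modEq (hS : IsPartialSpread k S) (hne : S.Nonempty) (hx : 0 < x)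
    (hmod : S.ncard ≡ x + 1 [MOD q ^ k]) :
    (k : ℤ) * (((q : ℤ) - 1) * (q : ℤ) ^ k) ≤
      (q : ℤ) ^ finrank F V - 1 - (S.ncard - x) * ((q : ℤ) ^ k - 1) := by
  have : Finite V := Module.finite_of_finite F
  have := Fintype.ofFinite S
  have := hne.to_subtype
  have hcard : Fintype.card S = S.ncard := by
    rw [← Nat.card_eq_fintype_card, Nat.card_coe_set_eq]
  have hdisj : Pairwise (Disjoint on ((↑) : S → Submodule F V)) := hS.pairwiseDisjoint.subtype _ _
  have hbound :=
    mul_le_ncard_holes_add hdisj (fun U ↦ (hS.finrank_eq U U.2).ge) hx (hcard ▸ hmod)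
  rw [ncard_holes hdisj] at hbound
  simp only [hS.finrank_eq _ (Subtype.coe_prop _), Finset.sum_const, Finset.card_univ, hcard,
    nsmul_eq_mul] at hbound
  linarith

theorem ncard_le (hS : IsPartialSpread k S) (hV : finrank F V = (t + 1) * k + h)
    (hk : ∑ i ∈ Finset.range h, q ^ i < k) :
    S.ncard ≤ ∑ i ∈ Finset.Icc 1 t, q ^ (i * k + h) + 1 := by
  by_contra! hlt
  obtain ⟨x, hx⟩ := Nat.exists_eq_add_of_lt hlt
  have hdvd : q ^ k ∣ ∑ i ∈ Finset.Icc 1 t, q ^ (i * k + h) :=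
    Finset.dvd_sum fun i hi ↦ pow_dvd_pow _ <|
      (Nat.le_mul_of_pos_left k (Finset.mem_Icc.1 hi).1).trans (Nat.le_add_right _ _)
  have hmod : S.ncard ≡ (x + 1) + 1 [MOD q ^ k] := by
    rw [hx, add_assoc, add_assoc, add_comm 1]
    simpa using (Nat.modEq_zero_iff_dvd.2 hdvd).add_right (x + 1 + 1)
  have hne : S.Nonempty := Set.nonempty_of_ncard_ne_zero (by omega)
  have hpos : (0 : ℤ) < (q - 1) * q ^ k := by
    have hq : (1 : ℤ) < q := by exact_mod_cast Finite.one_lt_card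
    have := sub_pos.2 hq
    positivity
  have hle : (k : ℤ) * ((q - 1) * q ^ k) ≤
      (∑ i ∈ Finset.range h, (q : ℤ) ^ i) * ((q - 1) * q ^ k) :=
    calc (k : ℤ) * ((q - 1) * q ^ k)
      _ ≤ (q : ℤ) ^ finrank F V - 1 - (S.ncard - (x + 1 : ℕ)) * ((q : ℤ) ^ k - 1) :=
        hS.mul_le_of_ncard_modEq hne x.succ_pos hmod
      _ = (q : ℤ) ^ (k + h) - q ^ k := by
        rw [hV, hx]
        push_cast
        linear_combination -pow_mul_sum_Icc_pow_add (q : ℤ) k h t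
      _ = (∑ i ∈ Finset.range h, (q : ℤ) ^ i) * ((q - 1) * q ^ k) := by
        linear_combination -(q : ℤ) ^ k * geom_sum_mul (q : ℤ) h
  have hk' : (k : ℤ) ≤ ∑ i ∈ Finset.range h, (q : ℤ) ^ i := le_of_mul_le_mul_right hle hpos
  exact hk.not_ge (by exact_mod_cast hk')

end IsPartialSpread

end PartialSpread

theorem stmt9_general {F V : Type*} [Field F] [Finite F] [AddCommGroup V] [Module F V] {s k h : ℕ}
    (hs : 1 ≤ s) (hV : finrank F V = s * k + h)
    (hk : (Nat.card F ^ h - 1) / (Nat.card F - 1) < k) :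
    IsGreatest {m : ℕ | ∃ S : Set (Submodule F V), IsPartialSpread k S ∧ S.ncard = m}
      ((Nat.card F ^ (s * k + h) - Nat.card F ^ (k + h)) / (Nat.card F ^ k - 1) + 1) ∧
    (Nat.card F ^ (s * k + h) - Nat.card F ^ (k + h)) / (Nat.card F ^ k - 1) + 1
      = (∑ i ∈ Finset.Icc 1 (s - 1), Nat.card F ^ (i * k + h)) + 1 := by
  obtain ⟨t, rfl⟩ := Nat.exists_eq_add_of_le' hs
  have hq : 1 < Nat.card F := Finite.one_lt_card
  have hk₀ : 0 < k := (Nat.zero_le _).trans_lt hk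
  have : Module.Finite F V := finite_of_finrank_pos (by rw [hV]; positivity)
  rw [← Nat.geomSum_eq hq] at hk
  rw [pow_sub_pow_div_pow_sub_one (Nat.one_lt_pow hk₀.ne' hq), Nat.add_sub_cancel]
  refine ⟨⟨exists_isPartialSpread_ncard_eq hk₀ hV, ?_⟩, rfl⟩
  rintro _ ⟨S, hS, rfl⟩
  exact hS.ncard_le hV hk

/-- (Năstase–Sissokho bound.) Let `n = sk + h` with `s ≥ 1`, `0 ≤ h < k`
(so `n ≡ h (mod k)`), and suppose `k > (q^h - 1)/(q - 1)` where `q = |𝔽|`.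
Then the maximum cardinality of a partial `k`-spread of `𝔽^n` is
`(q^n - q^{k+h})/(q^k - 1) + 1`, which equals `Σ_{i=1}^{s-1} q^{ik+h} + 1`. -/
theorem stmt9 {𝔽 : Type*} [Field 𝔽] [Fintype 𝔽] {n s k h : ℕ}
    (q : ℕ) (hq : q = Fintype.card 𝔽)
    (hs : 1 ≤ s) (hn : n = s * k + h) (hh : h < k)
    (hk : (q ^ h - 1) / (q - 1) < k) :
    IsGreatest {m : ℕ | ∃ S : Set (Submodule 𝔽 (Fin n → 𝔽)),
        (∀ U ∈ S, Module.finrank 𝔽 ↥U = k) ∧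
        (∀ U ∈ S, ∀ V ∈ S, U ≠ V → U ⊓ V = ⊥) ∧
        S.ncard = m}
      ((q ^ n - q ^ (k + h)) / (q ^ k - 1) + 1) ∧
    (q ^ n - q ^ (k + h)) / (q ^ k - 1) + 1
      = (∑ i ∈ Finset.Icc 1 (s - 1), q ^ (i * k + h)) + 1 := by
  subst hq hn
  simpa only [isPartialSpread_iff, and_assoc, Nat.card_eq_fintype_card] using
    stmt9_general (V := Fin (s * k + h) → 𝔽) hs (finrank_fin_fun 𝔽) (by simpa using hk)
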